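/- Let N = 2n+2 and let T ⪯ P be type D Schubert symbols with t(T) ≠ t(P), and fix c ∈ [1,n] with [c+1,n+1] ⊆ [T] ∩ [P]. Set ℓ = n+1−c, α = #(P ∩ [1,c]), and define the Schubert symbols P^{(c)} = {p − c : p ∈ P ∩ [c+1, N−c]} and T^{(c)} = {t − c : t ∈ T ∩ [c+1, N−c]} for OG(ℓ, 2ℓ). Then t(P) + t(T) ≡ t(P^{(c)}) + t(T^{(c)}) + 1 (mod 2), where for the window we use #(T ∩ [1,c]) = α + 1 (the exceptional-cut condition). -/

import Mathlib

open scoped Classical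

/-- `p : ℕ → ℕ` encodes a Schubert symbol `{p 1 < … < p m} ⊆ [1,N]`
with the conventions `p 0 = 0` and `p (m+1) = N+1`, and the isotropic
condition that no two elements sum to `N+1`. -/
structure IsSSym (N m : ℕ) (p : ℕ → ℕ) : Prop where
  zero : p 0 = 0
  top : p (m+1) = N+1
  mono : ∀ i j, i < j → j ≤ m+1 → p i < p j
  ub : ∀ i, 1 ≤ i → i ≤ m → p i ≤ N
  iso : ∀ i j, 1 ≤ i → i ≤ m → 1 ≤ j → j ≤ m → p i + p j ≠ N+1

/-- The underlying set `{p 1, …, p m}` of a Schubert symbol. -/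
def symSet (m : ℕ) (p : ℕ → ℕ) : Finset ℕ := (Finset.Icc 1 m).image p

/-- Componentwise order `t_i ≤ p_i` on Schubert symbols. -/
def leS (m : ℕ) (t p : ℕ → ℕ) : Prop := ∀ i, 1 ≤ i → i ≤ m → t i ≤ p i

/-- `c` is a visible cut of the Richardson diagram `D(P,T)`:
`p_i ≤ c < t_{i+1}` for some `0 ≤ i ≤ m`. -/
def visCut (m : ℕ) (p t : ℕ → ℕ) (c : ℕ) : Prop :=
  ∃ i, i ≤ m ∧ p i ≤ c ∧ c < t (i+1)

/-- `c` is an apparent cut of `D(P,T)`: `c` or `N−c` is a visible cut. -/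
def appCut (N m : ℕ) (p t : ℕ → ℕ) (c : ℕ) : Prop :=
  visCut m p t c ∨ visCut m p t (N - c)

/-- `c` is a zero column of `D(P,T)`: `p_j < c < t_{j+1}` for some `j`. -/
def zeroCol (m : ℕ) (p t : ℕ → ℕ) (c : ℕ) : Prop :=
  ∃ j, j ≤ m ∧ p j < c ∧ c < t (j+1)

/-- `(j,c)` is a lone star of `D(P,T)` with respect to the cut predicate `cut`. -/
def loneStar (m : ℕ) (p t : ℕ → ℕ) (cut : ℕ → Prop) (j c : ℕ) : Prop :=
  1 ≤ j ∧ j ≤ m ∧ t j ≤ c ∧ c ≤ p j ∧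
    ((c = t j ∧ cut c) ∨ (c = p j ∧ cut (c-1)))

/-- `c ∈ 𝓛_{P,T}` : `c` is a zero column, or column `N+1−c` contains a lone star. -/
def LSet (N m : ℕ) (p t : ℕ → ℕ) (cut : ℕ → Prop) (c : ℕ) : Prop :=
  1 ≤ c ∧ c ≤ N ∧
    (zeroCol m p t c ∨ ∃ j, loneStar m p t cut j (N+1-c))

/-- `[P] = P ∪ {N+1−p : p ∈ P}`. -/
def brP (N : ℕ) (P : Finset ℕ) : Finset ℕ := P ∪ P.image (fun p => N+1-p)

/-- The type-`D` type function `t(P) ∈ {0,1,2}`: if `n+1 ∈ [P]` it is the parity of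
`#([1,n+1] \ P)`; otherwise it is `2`. -/
def tD (n : ℕ) (P : Finset ℕ) : ℕ :=
  if (n+1) ∈ P ∨ (n+2) ∈ P then (Finset.Icc 1 (n+1) \ P).card % 2 else 2

/-- The type-`D` Bruhat order `T ⪯ P` on Schubert symbols for `OG(m, 2n+2)`. -/
def bruhatD (n m : ℕ) (t p : ℕ → ℕ) : Prop :=
  leS m t p ∧ ∀ c, 1 ≤ c → c ≤ n →
    Finset.Icc (c+1) (n+1) ⊆ brP (2*n+2) (symSet m p) →
    Finset.Icc (c+1) (n+1) ⊆ brP (2*n+2) (symSet m t) →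
    ((symSet m p) ∩ Finset.Icc 1 c).card = ((symSet m t) ∩ Finset.Icc 1 c).card →
    tD n (symSet m p) = tD n (symSet m t)

/-- The exceptional center cut `n+1` exists in `D(P,T)`:
`p_i = n+2 ≤ t_{i+1}` or `t_i = n+1 ≥ p_{i−1}` for some `i`. -/
def centerCut (n m : ℕ) (p t : ℕ → ℕ) : Prop :=
  ∃ i, 1 ≤ i ∧ i ≤ m ∧
    ((p i = n+2 ∧ n+2 ≤ t (i+1)) ∨ (t i = n+1 ∧ p (i-1) ≤ n+1))

/-- `c ∈ [1,n]` is a cut candidate of `D(P,T)`: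
`[c+1,n+1] ⊆ [P] ∩ [T]` and `#(T ∩ [1,c]) = #(P ∩ [1,c]) + 1`. -/
def cutCandidate (n m : ℕ) (p t : ℕ → ℕ) (c : ℕ) : Prop :=
  1 ≤ c ∧ c ≤ n ∧
  Finset.Icc (c+1) (n+1) ⊆ brP (2*n+2) (symSet m p) ∧
  Finset.Icc (c+1) (n+1) ⊆ brP (2*n+2) (symSet m t) ∧
  ((symSet m t) ∩ Finset.Icc 1 c).card = ((symSet m p) ∩ Finset.Icc 1 c).card + 1

/-- Exceptional cuts of `D(P,T)` in type `D`. -/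
def excCut (n m : ℕ) (p t : ℕ → ℕ) (c : ℕ) : Prop :=
  (centerCut n m p t ∧ c = n+1) ∨
  (tD n (symSet m t) ≠ tD n (symSet m p) ∧
    ∃ d, cutCandidate n m p t d ∧ (c = d ∨ c = 2*n+2 - d))

/-- The type-`D` cut set: apparent cuts together with exceptional cuts. -/
def cutD (n m : ℕ) (p t : ℕ → ℕ) (c : ℕ) : Prop :=
  appCut (2*n+2) m p t c ∨ excCut n m p t c

/-- The construction of the Schubert symbol `P'` from `T ⪯ P` in types `B` and `C`. -/
noncomputable def Pp (N m : ℕ) (p t : ℕ → ℕ) (i : ℕ) : ℕ :=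
  if p i < t (i+1) then p i
  else if ¬ appCut N m p t (t (i+1) - 1) then t (i+1)
  else ((Finset.Icc (t i) (t (i+1) - 1)).filter
        (fun c => ¬ LSet N m p t (appCut N m p t) c)).sup id

/-- The modified construction of the Schubert symbol `P̃` from `T ⪯ P` in type `D`. -/
noncomputable def Ptil (n m : ℕ) (p t : ℕ → ℕ) (i : ℕ) : ℕ :=
  if p i < t (i+1) then p i
  else if ¬ cutD n m p t (t (i+1) - 1) then
    (if t (i+1) = n+1 ∨ t (i+1) = n+2 then 2*n+3 - t (i+1) else t (i+1))
  else ((Finset.Icc (t i) (t (i+1) - 1)).filter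
        (fun c => ¬ LSet (2*n+2) m p t (cutD n m p t) c)).sup id

/-- A critical window `[c+1, N−c]` in `D(P,T)` (type `D`, defined when `t(T) ≠ t(P)`):
`c` and `N−c` are visible cuts and `[c+1,n+1] ⊆ [T] ∩ [P]`. -/
def critWindow (n m : ℕ) (p t : ℕ → ℕ) (c : ℕ) : Prop :=
  c ≤ n ∧ tD n (symSet m t) ≠ tD n (symSet m p) ∧
  visCut m p t c ∧ visCut m p t (2*n+2 - c) ∧
  Finset.Icc (c+1) (n+1) ⊆ brP (2*n+2) (symSet m t) ∧
  Finset.Icc (c+1) (n+1) ⊆ brP (2*n+2) (symSet m p)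

/-- The quadratic form `f_c = x_1 x_N + … + x_c x_{N+1−c}`. -/
noncomputable def fquad (N : ℕ) (c : ℕ) (x : ℕ → ℂ) : ℂ := ∑ i ∈ Finset.Icc 1 c, x i * x (N+1-i)

/-- The variety `Z_{P,T}` (affine cone) cut out by quadratic equations `f_c = 0`
for `c` in a prescribed set `Q` and linear equations `x_c = 0` for `c ∈ 𝓛_{P,T}`. -/
def Zvar (N m : ℕ) (p t : ℕ → ℕ) (Q : ℕ → Prop) (cut : ℕ → Prop) : Set (ℕ → ℂ) :=
  {x | (∀ c, Q c → fquad N c x = 0) ∧ ∀ c, LSet N m p t cut c → x c = 0}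

theorem count_aux (n c : ℕ) (hcn : c ≤ n) (S : Finset ℕ) :
    (Finset.Icc 1 (n+1) \ S).card + (S ∩ Finset.Icc 1 c).card =
      (Finset.Icc 1 (n+1-c) \
          ((S ∩ Finset.Icc (c+1) (2*n+2-c)).image (fun x => x - c))).card + c := by
  have h1 : Finset.Icc 1 (n+1) \ S = (Finset.Icc 1 c \ S) ∪
      (Finset.Icc 1 (n+1-c) \
          ((S ∩ Finset.Icc (c+1) (2*n+2-c)).image (fun x => x - c))).image (fun x => x + c) := by
    ext x
    simp only [Finset.mem_sdiff, Finset.mem_Icc, Finset.mem_union, Finset.mem_image,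
      Finset.mem_inter]
    constructor
    · rintro ⟨⟨a, b⟩, hx⟩
      by_cases h : x ≤ c
      · exact Or.inl ⟨⟨a, h⟩, hx⟩
      · refine Or.inr ⟨x - c, ⟨⟨by omega, by omega⟩, ?_⟩, by omega⟩
        rintro ⟨y, ⟨hy, hy1, hy2⟩, hyx⟩
        have : y = x := by omega
        exact hx (this ▸ hy)
    · rintro (⟨⟨a, b⟩, hx⟩ | ⟨y, ⟨⟨a, b⟩, hy⟩, rfl⟩)
      · exact ⟨⟨a, by omega⟩, hx⟩
      · refine ⟨⟨by omega, by omega⟩, fun hS => hy ⟨y + c, ⟨hS, by omega, by omega⟩, by omega⟩⟩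
  have hd : Disjoint (Finset.Icc 1 c \ S) ((Finset.Icc 1 (n+1-c) \
          ((S ∩ Finset.Icc (c+1) (2*n+2-c)).image (fun x => x - c))).image (fun x => x + c)) := by
    rw [Finset.disjoint_left]
    intro x hx hx'
    simp only [Finset.mem_sdiff, Finset.mem_Icc, Finset.mem_image] at hx hx'
    obtain ⟨y, ⟨⟨a, b⟩, _⟩, rfl⟩ := hx'
    omega
  rw [h1, Finset.card_union_of_disjoint hd,
    Finset.card_image_of_injective _ (add_left_injective c)]
  have h2 := Finset.card_sdiff_add_card_inter (Finset.Icc 1 c) S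
  rw [Finset.inter_comm, Nat.card_Icc] at h2
  omega

/-- (type D) Let `T ⪯ P` with `t(T) ≠ t(P)`, `c ∈ [1,n]` with
`[c+1,n+1] ⊆ [T] ∩ [P]` and `#(T ∩ [1,c]) = #(P ∩ [1,c]) + 1` (the exceptional-cut
condition). With `ℓ = n+1−c` and `P^{(c)}, T^{(c)}` the windowed symbols for
`OG(ℓ,2ℓ)`, one has `t(P) + t(T) ≡ t(P^{(c)}) + t(T^{(c)}) + 1 (mod 2)`,
where types are the parities `#([1,n+1] \ ·)` resp. `#([1,ℓ] \ ·)`. -/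
theorem stmt_19 (n m : ℕ) (p t : ℕ → ℕ)
    (hp : IsSSym (2*n+2) m p) (ht : IsSSym (2*n+2) m t)
    (hb : bruhatD n m t p)
    (htype : tD n (symSet m t) ≠ tD n (symSet m p))
    (c : ℕ) (hc1 : 1 ≤ c) (hcn : c ≤ n)
    (hsub : Finset.Icc (c+1) (n+1) ⊆
      brP (2*n+2) (symSet m t) ∩ brP (2*n+2) (symSet m p))
    (hexc : (symSet m t ∩ Finset.Icc 1 c).card
      = (symSet m p ∩ Finset.Icc 1 c).card + 1) :
    ((Finset.Icc 1 (n+1) \ symSet m p).card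
        + (Finset.Icc 1 (n+1) \ symSet m t).card) ≡
      ((Finset.Icc 1 (n+1-c) \
          ((symSet m p ∩ Finset.Icc (c+1) (2*n+2-c)).image (fun x => x - c))).card
        + (Finset.Icc 1 (n+1-c) \
          ((symSet m t ∩ Finset.Icc (c+1) (2*n+2-c)).image (fun x => x - c))).card
        + 1) [MOD 2] := by
  have h1 := count_aux n c hcn (symSet m p)
  have h2 := count_aux n c hcn (symSet m t)
  unfold Nat.ModEq
  omega
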